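/- Fix positive integers c and n, positive integers x₁,…,xₙ with d = x₁+⋯+xₙ, and equip the rectangle Δ of width c and height d with boundary data μ₁ = (c), μ₂ = (1,…,1) (c parts equal to 1), ν₁ = (x₁,…,xₙ), ν₂ = (d). Assume the genericity condition Σ_{i∈I} xᵢ ≠ Σ_{j∈J} xⱼ for all pairs of distinct subsets I, J ⊆ {1,…,n}. Then every λ-increasing lattice path γ from (0,d) to (c,0) in Δ with n+c+1 steps and mult(γ) ≠ 0 is equal to γ(A,B) for some admissible pair (A,B). -/

import Mathlib

open Classical

noncomputable section

namespace TropPaths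

/-- Lattice points of the plane. -/
abbrev Pt := ℤ × ℤ

/-- The order on `ℤ²` induced by `λ(x,y) = x - εy` for a small irrational `ε > 0`:
`p ≺ q` iff `p₁ < q₁`, or (`p₁ = q₁` and `p₂ > q₂`). -/
def lamLT (p q : Pt) : Prop := p.1 < q.1 ∨ (p.1 = q.1 ∧ q.2 < p.2)

/-- A lattice path, recorded as the list of its points, is `λ`-increasing. -/
def Increasing (γ : List Pt) : Prop := List.Chain' lamLT γ

/-- The determinant of two vectors in `ℤ²`. -/
def det (u v : Pt) : ℤ := u.1 * v.2 - u.2 * v.1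

/-- The `k`-th point of a path (junk value out of range). -/
def pt (γ : List Pt) (k : ℕ) : Pt := γ.getD k (0, 0)

/-- The `k`-th step vector of a path. -/
def stepAt (γ : List Pt) (k : ℕ) : Pt := pt γ (k + 1) - pt γ k

/-- The list of all step vectors of a path. -/
def steps (γ : List Pt) : List Pt := List.zipWith (fun a b => b - a) γ γ.tail

/-- The multiset of down steps `(0,-s)`, `s > 0`, of a path. -/
def downSteps (γ : List Pt) : Multiset Pt :=
  Multiset.filter (fun v => v.1 = 0 ∧ v.2 < 0) (steps γ : Multiset Pt)

/-- The multiset of up-right steps of a path. -/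
def upRightSteps (γ : List Pt) : Multiset Pt :=
  Multiset.filter (fun v => 0 < v.1 ∧ 0 < v.2) (steps γ : Multiset Pt)

/-- The path makes a turn of sign `s` at the (interior) index `k`; for left turns
`s = (0 < ·)`, for right turns `s = (· < 0)`. -/
def TurnAt (s : ℤ → Prop) (γ : List Pt) (k : ℕ) : Prop :=
  0 < k ∧ k + 1 < γ.length ∧ s (det (pt γ k - pt γ (k - 1)) (pt γ (k + 1) - pt γ k))

/-- `k` is the first turn of sign `s` of the path. -/
def FirstTurn (s : ℤ → Prop) (γ : List Pt) (k : ℕ) : Prop :=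
  TurnAt s γ k ∧ ∀ j, TurnAt s γ j → k ≤ j

/-- Twice the area of the triangle with vertices `γ(k-1), γ(k), γ(k+1)`. -/
def triArea2 (γ : List Pt) (k : ℕ) : ℕ :=
  (det (pt γ k - pt γ (k - 1)) (pt γ (k + 1) - pt γ k)).natAbs

/-- The path obtained by cutting the corner at index `k`, i.e. deleting the point `γ(k)`. -/
def cut (γ : List Pt) (k : ℕ) : List Pt := γ.eraseIdx k

/-- The path obtained by completing the parallelogram at index `k`, i.e. replacing
`γ(k)` by `γ(k-1) + γ(k+1) - γ(k)`. -/
def push (γ : List Pt) (k : ℕ) : List Pt :=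
  γ.set k (pt γ (k - 1) + pt γ (k + 1) - pt γ k)

/-- All points of the path lie in `Δ`. -/
def Inside (Δ : Set Pt) (γ : List Pt) : Prop := ∀ z ∈ γ, z ∈ Δ

/-- Mikhalkin's multiplicity recursion, as a functional relation: `MultRel Δ Init s γ m`
means that the recursion (performed always at the *first* turn of sign `s`) assigns the
multiplicity `m` to the path `γ`.  Here `Δ` is the set of lattice points of the polygon,
`Init` the set of initial paths (of multiplicity `1`), and `s` the turn sign
(`0 < ·` for left turns / `mult₊`, `· < 0` for right turns / `mult₋`). -/
inductive MultRel (Δ : Set Pt) (Init : List Pt → Prop) (s : ℤ → Prop) : List Pt → ℕ → Prop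
  | init {γ : List Pt} : Init γ → MultRel Δ Init s γ 1
  | noTurn {γ : List Pt} : ¬Init γ → (∀ k, ¬TurnAt s γ k) → MultRel Δ Init s γ 0
  | stepIn {γ : List Pt} {k m' m'' : ℕ} : ¬Init γ → FirstTurn s γ k →
      Inside Δ (push γ k) → MultRel Δ Init s (cut γ k) m' →
      MultRel Δ Init s (push γ k) m'' →
      MultRel Δ Init s γ (triArea2 γ k * m' + m'')
  | stepOut {γ : List Pt} {k m' : ℕ} : ¬Init γ → FirstTurn s γ k →
      ¬Inside Δ (push γ k) → MultRel Δ Init s (cut γ k) m' →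
      MultRel Δ Init s γ (triArea2 γ k * m')

/-- The multiplicity function determined by Mikhalkin's recursion. -/
def multOf (Δ : Set Pt) (Init : List Pt → Prop) (s : ℤ → Prop) (γ : List Pt) : ℕ :=
  if h : ∃ m, MultRel Δ Init s γ m then h.choose else 0

/-- `γ ≺ δ`: the path `δ` is obtained from `γ` by finitely many steps of the multiplicity
recursion (each step cuts the corner at the first turn of sign `s`, or completes the
parallelogram there). -/
inductive Reaches (Δ : Set Pt) (Init : List Pt → Prop) (s : ℤ → Prop) : List Pt → List Pt → Prop
  | refl (γ : List Pt) : Reaches Δ Init s γ γ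
  | cutStep {γ δ : List Pt} {k : ℕ} : ¬Init γ → FirstTurn s γ k →
      Reaches Δ Init s (cut γ k) δ → Reaches Δ Init s γ δ
  | pushStep {γ δ : List Pt} {k : ℕ} : ¬Init γ → FirstTurn s γ k →
      Inside Δ (push γ k) → Reaches Δ Init s (push γ k) δ → Reaches Δ Init s γ δ

/-- The lattice path starting at `p` with the given list of step vectors. -/
def pathFrom : Pt → List Pt → List Pt
  | p, [] => [p]
  | p, v :: vs => p :: pathFrom (p + v) vs

/-- Horizontal (rightward) steps of the given sizes. -/
def hSteps (l : List ℕ) : List Pt := l.map fun k => ((k : ℤ), 0)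

/-- Vertical downward steps of the given sizes. -/
def dSteps (l : List ℕ) : List Pt := l.map fun k => ((0 : ℤ), -(k : ℤ))

/-- A multiset of positive integers is a partition of `t`. -/
def IsPartition (m : Multiset ℕ) (t : ℕ) : Prop := (∀ k ∈ m, 0 < k) ∧ m.sum = t

/-! ## The rectangle `[0,c] × [0,d]` -/

/-- The lattice points of the rectangle with vertices `(0,0), (c,0), (0,d), (c,d)`. -/
def rect (c d : ℕ) : Set Pt := {z | 0 ≤ z.1 ∧ z.1 ≤ (c : ℤ) ∧ 0 ≤ z.2 ∧ z.2 ≤ (d : ℤ)}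

/-- `β₊`-initial paths of the rectangle: from `p = (0,d)` clockwise along the top edge with
step sizes the parts of `μ₂` and then down the right edge with step sizes the parts of `ν₂`. -/
def InitPlusRect (d : ℕ) (μ₂ ν₂ : Multiset ℕ) (γ : List Pt) : Prop :=
  ∃ s t : List ℕ, (s : Multiset ℕ) = μ₂ ∧ (t : Multiset ℕ) = ν₂ ∧
    γ = pathFrom (0, (d : ℤ)) (hSteps s ++ dSteps t)

/-- `β₋`-initial paths of the rectangle: from `p = (0,d)` counterclockwise down the left edge
with step sizes the parts of `ν₁` and then along the bottom edge with step sizes the parts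
of `μ₁`. -/
def InitMinusRect (d : ℕ) (μ₁ ν₁ : Multiset ℕ) (γ : List Pt) : Prop :=
  ∃ s t : List ℕ, (s : Multiset ℕ) = ν₁ ∧ (t : Multiset ℕ) = μ₁ ∧
    γ = pathFrom (0, (d : ℤ)) (dSteps s ++ hSteps t)

/-- `mult₊` for the rectangle with boundary data `(μ₁, μ₂, ν₁, ν₂)`. -/
def multPlusRect (c d : ℕ) (μ₂ ν₂ : Multiset ℕ) : List Pt → ℕ :=
  multOf (rect c d) (InitPlusRect d μ₂ ν₂) (fun x => 0 < x)

/-- `mult₋` for the rectangle with boundary data `(μ₁, μ₂, ν₁, ν₂)`. -/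
def multMinusRect (c d : ℕ) (μ₁ ν₁ : Multiset ℕ) : List Pt → ℕ :=
  multOf (rect c d) (InitMinusRect d μ₁ ν₁) (fun x => x < 0)

/-- `mult = mult₊ · mult₋` for the rectangle with boundary data `(μ₁, μ₂, ν₁, ν₂)`. -/
def multRect (c d : ℕ) (μ₁ μ₂ ν₁ ν₂ : Multiset ℕ) (γ : List Pt) : ℕ :=
  multPlusRect c d μ₂ ν₂ γ * multMinusRect c d μ₁ ν₁ γ

/-- A `λ`-increasing lattice path from `(0,d)` to `(c,0)` contained in the rectangle. -/
def IsPathRect (c d : ℕ) (γ : List Pt) : Prop :=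
  Increasing γ ∧ γ.head? = some (0, (d : ℤ)) ∧ γ.getLast? = some ((c : ℤ), 0) ∧
    Inside (rect c d) γ

/-- The genericity condition: all subset sums of the `xᵢ` are distinct. -/
def Generic {n : ℕ} (x : Fin n → ℕ) : Prop :=
  ∀ I J : Finset (Fin n), I ≠ J → ∑ i ∈ I, x i ≠ ∑ j ∈ J, x j

/-! ## Admissible pairs and the paths `γ(A,B)` -/

/-- An admissible pair `(A,B)`: pairwise disjoint sequences `A₀,…,A_{c-1}` in `{1,…,n}`
whose entries together partition `{1,…,n}`, and pairwise disjoint subsets `B₀,…,B_{c-1}`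
with union `{1,…,n}`, such that `B₀ ≠ ∅` and
`B_k ⊆ (A₀ ∪ ⋯ ∪ A_k) \ (B₀ ∪ ⋯ ∪ B_{k-1})` for all `k`. -/
def IsAdmissible {c n : ℕ} (A : Fin c → List (Fin n)) (B : Fin c → Finset (Fin n)) : Prop :=
  ((List.ofFn A).flatten : Multiset (Fin n)) = (Finset.univ : Finset (Fin n)).val ∧
  (∀ i : Fin n, ∃! k : Fin c, i ∈ B k) ∧
  (∀ k : Fin c, (k : ℕ) = 0 → (B k).Nonempty) ∧
  ∀ k : Fin c, B k ⊆
    (Finset.univ.filter fun i => ∃ j : Fin c, j ≤ k ∧ i ∈ A j) \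
      (Finset.univ.filter fun i => ∃ j : Fin c, j < k ∧ i ∈ B j)

/-- The steps of `γ(A,B)` in the column `x = k`: down steps of sizes `xᵢ`, `i ∈ A_k`, in
order, followed by the step `(1, Σ_{i ∈ B_k} xᵢ)` to the next column. -/
def colSteps {c n : ℕ} (x : Fin n → ℕ) (A : Fin c → List (Fin n))
    (B : Fin c → Finset (Fin n)) (k : Fin c) : List Pt :=
  ((A k).map fun i => ((0 : ℤ), -(x i : ℤ))) ++ [((1 : ℤ), ∑ i ∈ B k, (x i : ℤ))]

/-- The lattice path `γ(A,B)` associated to an admissible pair, from `(0,d)` to `(c,0)`,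
whose last step is the full right edge. -/
def gammaAB {c n : ℕ} (x : Fin n → ℕ) (A : Fin c → List (Fin n))
    (B : Fin c → Finset (Fin n)) : List Pt :=
  pathFrom (0, ((∑ i, x i : ℕ) : ℤ))
    ((List.ofFn (colSteps x A B)).flatten ++ [((0 : ℤ), -((∑ i, x i : ℕ) : ℤ))])

/-! ## The trapezoid of Lemma 4.? -/

/-- The lattice points of the trapezoid with vertices `(0,0), (0,a), (1,a), (1,b)`. -/
def trap (a b : ℕ) : Set Pt :=
  {z | 0 ≤ z.1 ∧ z.1 ≤ 1 ∧ (b : ℤ) * z.1 ≤ z.2 ∧ z.2 ≤ (a : ℤ)}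

/-- `β₊`-initial paths of the trapezoid: one step of lattice length 1 along the top edge,
then down the right edge with step sizes the parts of `βright`. -/
def InitPlusTrap (a : ℕ) (βright : Multiset ℕ) (γ : List Pt) : Prop :=
  ∃ t : List ℕ, (t : Multiset ℕ) = βright ∧
    γ = pathFrom (0, (a : ℤ)) (((1 : ℤ), (0 : ℤ)) :: dSteps t)

/-! ## Automorphisms of a partition -/

/-- `|Aut ν| = ∏_k m_k(ν)!` where `m_k(ν)` is the number of parts of `ν` equal to `k`. -/
def autCard (m : Multiset ℕ) : ℕ :=
  (m.dedup.map fun k => (m.count k).factorial).prod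

/-!
On step vectors the recursion either adds two neighbouring steps or swaps them.  For `mult₋` this
implies that the vertical steps of `γ` include those of the left edge, so that the extra vertical
step forces some other step to climb and `(c,0)` is not a step of `γ`.  Since all non-vertical steps
of `γ` have width one and do not descend by `mult₊`, its first and last steps are vertical, the
last one being the full right edge, and the remaining vertical steps are those of the left edge.
Labelling them by `{1,…,n}` and reading the recursion for `mult₊` backwards from the top edge, the
label of every down step is inherited by a later step to the next column, and this gives `(A,B)`.
-/

/-- Forward vectors: the possible steps of a `λ`-increasing path. -/
def IsForward (u : Pt) : Prop := lamLT 0 u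

/-- The conclusion of the multiplicity recursion on step lists: `Reduces I s σ` says that some
branch of the recursion for turns of sign `s` leads from `σ` to a step list in `I`.  On steps,
cutting a corner adds two neighbours and completing the parallelogram swaps them.  The corner need
not be the first turn, and leaving the polygon is allowed, because neither restriction matters
for the invariants used here. -/
inductive Reduces (I : List Pt → Prop) (s : ℤ → Prop) : List Pt → Prop
  | init {σ : List Pt} : I σ → Reduces I s σ
  | cut {a b : List Pt} {u v : Pt} : IsForward u → IsForward v → s (det u v) →
      Reduces I s (a ++ (u + v) :: b) → Reduces I s (a ++ u :: v :: b)
  | push {a b : List Pt} {u v : Pt} : IsForward u → IsForward v → s (det u v) →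
      Reduces I s (a ++ v :: u :: b) → Reduces I s (a ++ u :: v :: b)

/-- The vertical steps of a step list, in order. -/
def verticals (σ : List Pt) : List Pt := σ.filter fun u => u.1 = 0

/-- Steps advancing by at most one column and not descending while they do so; every step of a path
of nonzero `mult₊` is of this kind. -/
def IsColumnStep (u : Pt) : Prop := u.1 ≤ 1 ∧ (0 < u.1 → 0 ≤ u.2)

/-- Step lists of the `β₊`-initial path with data `μ₂ = (1,…,1)` and `ν₂ = (d)`. -/
def IsPlusBoundary (c d : ℕ) (σ : List Pt) : Prop :=
  σ = List.replicate c (1, 0) ++ [(0, -(d : ℤ))]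

/-- Step lists of the `β₋`-initial paths with data `ν₁` the parts of `xs` and `μ₁ = (c)`. -/
def IsMinusBoundary (c : ℕ) (xs : List ℕ) (σ : List Pt) : Prop :=
  ∃ s : List ℕ, s.Perm xs ∧ σ = dSteps s ++ [((c : ℤ), 0)]

section ListDecomposition

variable {α : Type*} {u v e : α} {a b t l : List α}

theorem exists_append_of_append_eq_append_cons (h : a ++ b = t ++ u :: l) (hu : u ∉ a) :
    ∃ m, t = a ++ m ∧ b = m ++ u :: l := by
  rcases List.append_eq_append_iff.1 h with ⟨m, rfl, hb⟩ | ⟨m, rfl, hm⟩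
  · exact ⟨m, rfl, hb⟩
  · rcases List.append_eq_cons_iff.1 hm.symm with ⟨rfl, rfl⟩ | ⟨m', rfl, -⟩
    · exact ⟨[], by simp, rfl⟩
    · simp at hu

theorem append_cons_cons_eq_concat (h : a ++ u :: v :: b = l ++ [e]) :
    (b = [] ∧ v = e ∧ l = a ++ [u]) ∨ ∃ b', b = b' ++ [e] ∧ l = a ++ u :: v :: b' := by
  rcases List.eq_nil_or_concat' b with rfl | ⟨b', e', rfl⟩
  · have h' : (a ++ [u]) ++ [v] = l ++ [e] := by simpa using h
    obtain ⟨rfl, hv⟩ := List.append_inj' h' rfl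
    exact Or.inl ⟨rfl, by simpa using hv, rfl⟩
  · have h' : (a ++ u :: v :: b') ++ [e'] = l ++ [e] := by simpa using h
    obtain ⟨rfl, he⟩ := List.append_inj' h' rfl
    exact Or.inr ⟨b', by simpa using he, rfl⟩

end ListDecomposition

section Steps

variable {p q : Pt} {a b t γ : List Pt}

theorem steps_cons_cons (p q : Pt) (t : List Pt) :
    steps (p :: q :: t) = (q - p) :: steps (q :: t) := rfl

theorem steps_append_cons (a : List Pt) (p : Pt) (b : List Pt) :
    steps (a ++ p :: b) = steps (a ++ [p]) ++ steps (p :: b) := by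
  induction a with
  | nil => rfl
  | cons q a ih => cases a <;> simp_all [steps_cons_cons]

theorem pathFrom_steps (p : Pt) (t : List Pt) : pathFrom p (steps (p :: t)) = p :: t := by
  induction t generalizing p with
  | nil => rfl
  | cons q t ih => simp [steps_cons_cons, pathFrom, ih]

theorem steps_pathFrom (p : Pt) (σ : List Pt) : steps (pathFrom p σ) = σ := by
  induction σ generalizing p with
  | nil => rfl
  | cons v σ ih =>
    have hcons : pathFrom (p + v) σ = (p + v) :: (pathFrom (p + v) σ).tail := by
      cases σ <;> rfl
    rw [pathFrom, hcons, steps_cons_cons, ← hcons, ih, add_sub_cancel_left]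

theorem length_steps (γ : List Pt) : (steps γ).length = γ.length - 1 := by
  simp [steps]

theorem Increasing.isForward_of_mem_steps (h : Increasing γ) : ∀ u ∈ steps γ, IsForward u := by
  induction γ with
  | nil => simp [steps]
  | cons p γ ih =>
    cases γ with
    | nil => simp [steps]
    | cons q γ =>
      obtain ⟨hpq, hγ⟩ := List.isChain_cons_cons.1 h
      rw [steps_cons_cons, List.forall_mem_cons]
      refine ⟨?_, ih hγ⟩
      simpa [IsForward, lamLT, sub_eq_zero, eq_comm] using hpq

theorem TurnAt.exists_eq_append {s : ℤ → Prop} {k : ℕ} (h : TurnAt s γ k) :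
    ∃ a p q r b, γ = a ++ p :: q :: r :: b ∧ k = a.length + 1 := by
  obtain ⟨hk, hlen, -⟩ := h
  obtain ⟨j, rfl⟩ := Nat.exists_eq_add_one.2 hk
  refine ⟨γ.take j, γ[j], γ[j + 1], γ[j + 2], γ.drop (j + 3), ?_, ?_⟩
  · simp
  · rw [List.length_take_of_le (by omega)]

theorem TurnAt.exists_steps_eq {s : ℤ → Prop} {k : ℕ} (h : TurnAt s γ k) :
    ∃ a u v b, steps γ = a ++ u :: v :: b ∧ s (det u v) ∧
      steps (cut γ k) = a ++ (u + v) :: b ∧ steps (push γ k) = a ++ v :: u :: b := by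
  obtain ⟨a, p, q, r, b, rfl, rfl⟩ := h.exists_eq_append
  have hp : pt (a ++ p :: q :: r :: b) a.length = p := by simp [pt]
  have hq : pt (a ++ p :: q :: r :: b) (a.length + 1) = q := by simp [pt]
  have hr : pt (a ++ p :: q :: r :: b) (a.length + 1 + 1) = r := by
    simp [pt, Nat.add_assoc]
  refine ⟨steps (a ++ [p]), q - p, r - q, steps (r :: b), ?_, ?_, ?_, ?_⟩
  · rw [steps_append_cons, steps_cons_cons, steps_cons_cons]
  · simpa [hp, hq, hr] using h.2.2
  · have hcut : cut (a ++ p :: q :: r :: b) (a.length + 1) = a ++ p :: r :: b := by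
      simp [cut, List.eraseIdx_append_of_length_le]
    rw [hcut, steps_append_cons, steps_cons_cons, sub_add_sub_cancel']
  · have hpush : push (a ++ p :: q :: r :: b) (a.length + 1) = a ++ p :: (p + r - q) :: r :: b := by
      simp [push, hp, hq, hr]
    rw [hpush, steps_append_cons, steps_cons_cons, steps_cons_cons]
    congr 2
    · abel
    · congr 1; abel

end Steps

section ForwardSteps

variable {u v : Pt} {σ : List Pt}

theorem IsForward.fst_nonneg (hu : IsForward u) : 0 ≤ u.1 := by
  simp only [IsForward, lamLT, Prod.fst_zero, Prod.snd_zero] at hu; omega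

theorem IsForward.snd_neg (hu : IsForward u) (h : u.1 = 0) : u.2 < 0 := by
  simp only [IsForward, lamLT, Prod.fst_zero, Prod.snd_zero] at hu; omega

theorem IsForward.add (hu : IsForward u) (hv : IsForward v) : IsForward (u + v) := by
  simp only [IsForward, lamLT, Prod.fst_zero, Prod.snd_zero, Prod.fst_add, Prod.snd_add] at *
  omega

theorem IsForward.fst_pos_of_det_pos (hu : IsForward u) (hv : IsForward v) (h : 0 < det u v) :
    0 < v.1 := by
  refine hv.fst_nonneg.lt_of_ne' fun hv₀ => ?_
  simp only [det, hv₀, mul_zero, sub_zero] at h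
  nlinarith [hu.fst_nonneg, hv.snd_neg hv₀]

theorem IsForward.fst_pos_of_det_neg (hu : IsForward u) (hv : IsForward v) (h : det u v < 0) :
    0 < u.1 := by
  refine hu.fst_nonneg.lt_of_ne' fun hu₀ => ?_
  simp only [det, hu₀, zero_mul, zero_sub] at h
  nlinarith [hv.fst_nonneg, hu.snd_neg hu₀]

theorem snd_neg_of_det_neg (hu : 0 < u.1) (hv : 0 ≤ v.1) (hu₂ : u.2 ≤ 0) (h : det u v < 0) :
    v.2 < 0 := by
  simp only [det] at h
  nlinarith

theorem verticals_append (a b : List Pt) : verticals (a ++ b) = verticals a ++ verticals b :=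
  List.filter_append ..

theorem verticals_cons_of_fst_eq_zero (h : u.1 = 0) (σ : List Pt) :
    verticals (u :: σ) = u :: verticals σ :=
  List.filter_cons_of_pos (by simpa using h)

theorem verticals_cons_of_fst_pos (h : 0 < u.1) (σ : List Pt) :
    verticals (u :: σ) = verticals σ :=
  List.filter_cons_of_neg (by simpa using h.ne')

theorem verticals_concat_of_fst_eq_zero (h : u.1 = 0) (σ : List Pt) :
    verticals (σ ++ [u]) = verticals σ ++ [u] := by
  rw [verticals_append, verticals_cons_of_fst_eq_zero h]; rfl

theorem mem_verticals : u ∈ verticals σ ↔ u ∈ σ ∧ u.1 = 0 := by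
  simp [verticals]

theorem length_eq_length_verticals_add (hσ : ∀ u ∈ σ, IsForward u) (h₁ : ∀ u ∈ σ, u.1 ≤ 1) :
    (σ.length : ℤ) = (verticals σ).length + σ.sum.1 := by
  induction σ with
  | nil => simp [verticals]
  | cons u σ ih =>
    rw [List.forall_mem_cons] at hσ h₁
    have hind := ih hσ.2 h₁.2
    rcases hσ.1.fst_nonneg.eq_or_lt' with hu | hu
    · rw [verticals_cons_of_fst_eq_zero hu]
      simp only [List.length_cons, List.sum_cons, Prod.fst_add]; omega
    · rw [verticals_cons_of_fst_pos hu]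
      simp only [List.length_cons, List.sum_cons, Prod.fst_add]; omega

theorem snd_sum_le_snd_sum_verticals (hσ : ∀ u ∈ σ, IsForward u)
    (h : ∀ u ∈ σ, 0 < u.1 → u.2 ≤ 0) : σ.sum.2 ≤ (verticals σ).sum.2 := by
  induction σ with
  | nil => rfl
  | cons u σ ih =>
    rw [List.forall_mem_cons] at hσ h
    have hind := ih hσ.2 h.2
    rcases hσ.1.fst_nonneg.eq_or_lt' with hu | hu
    · rw [verticals_cons_of_fst_eq_zero hu]; simpa using hind
    · rw [verticals_cons_of_fst_pos hu, List.sum_cons, Prod.snd_add]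
      linarith [h.1 hu]

theorem fst_sum_nonneg (hσ : ∀ u ∈ σ, IsForward u) : 0 ≤ σ.sum.1 := by
  induction σ with
  | nil => rfl
  | cons u σ ih =>
    rw [List.forall_mem_cons] at hσ
    exact add_nonneg hσ.1.fst_nonneg (ih hσ.2)

theorem fst_le_fst_sum (hσ : ∀ u ∈ σ, IsForward u) (hu : u ∈ σ) : u.1 ≤ σ.sum.1 := by
  rw [(List.perm_cons_erase hu).sum_eq, List.sum_cons, Prod.fst_add]
  linarith [fst_sum_nonneg (σ := σ.erase u) fun w hw => hσ w (List.mem_of_mem_erase hw)]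

theorem hSteps_eq_map (xs : List ℕ) : hSteps xs = xs.map fun k : ℕ => ((k : ℤ), (0 : ℤ)) := by
  induction xs with
  | nil => rfl
  | cons k xs ih => simpa [hSteps] using ih

theorem dSteps_eq_map (xs : List ℕ) : dSteps xs = xs.map fun k : ℕ => ((0 : ℤ), -(k : ℤ)) := by
  induction xs with
  | nil => rfl
  | cons k xs ih => simpa [dSteps] using ih

theorem length_dSteps (xs : List ℕ) : (dSteps xs).length = xs.length := by
  rw [dSteps_eq_map, List.length_map]

theorem sum_dSteps (xs : List ℕ) : (dSteps xs).sum = (0, -(xs.sum : ℤ)) := by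
  rw [dSteps_eq_map]
  induction xs with
  | nil => rfl
  | cons k xs ih =>
    rw [List.map_cons, List.sum_cons, ih]
    simp [neg_add_rev, add_comm]

theorem fst_eq_zero_of_mem_dSteps {xs : List ℕ} (hu : u ∈ dSteps xs) : u.1 = 0 := by
  rw [dSteps_eq_map] at hu
  obtain ⟨k, -, rfl⟩ := List.mem_map.1 hu
  rfl

end ForwardSteps

section Recursion

variable {Δ : Set Pt} {Init I : List Pt → Prop} {s : ℤ → Prop} {γ : List Pt} {m : ℕ}

theorem exists_multRel_of_multOf_ne_zero (h : multOf Δ Init s γ ≠ 0) :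
    ∃ m, MultRel Δ Init s γ m ∧ m ≠ 0 := by
  unfold multOf at h
  split_ifs at h with hex
  · exact ⟨_, hex.choose_spec, h⟩
  · exact absurd rfl h

theorem MultRel.reduces (h : MultRel Δ Init s γ m) (hm : m ≠ 0)
    (hI : ∀ γ, Init γ → I (steps γ)) (hγ : ∀ u ∈ steps γ, IsForward u) :
    Reduces I s (steps γ) := by
  induction h with
  | init hinit => exact .init (hI _ hinit)
  | noTurn => exact absurd rfl hm
  | @stepIn _ _ m' m'' _ hturn _ _ _ ihcut ihpush =>
    obtain ⟨a, u, v, b, hσ, hdet, hcut, hpush⟩ := hturn.1.exists_steps_eq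
    simp only [hσ, hcut, hpush, List.forall_mem_append, List.forall_mem_cons] at hγ ihcut ihpush ⊢
    obtain ⟨ha, hu, hv, hb⟩ := hγ
    by_cases hm'' : m'' = 0
    · have hm' : m' ≠ 0 := by rintro rfl; simp [hm''] at hm
      exact .cut hu hv hdet (ihcut hm' ⟨ha, hu.add hv, hb⟩)
    · exact .push hu hv hdet (ihpush hm'' ⟨ha, hv, hu, hb⟩)
  | stepOut _ hturn _ _ ihcut =>
    obtain ⟨a, u, v, b, hσ, hdet, hcut, -⟩ := hturn.1.exists_steps_eq
    simp only [hσ, hcut, List.forall_mem_append, List.forall_mem_cons] at hγ ihcut ⊢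
    obtain ⟨ha, hu, hv, hb⟩ := hγ
    exact .cut hu hv hdet (ihcut (right_ne_zero_of_mul hm) ⟨ha, hu.add hv, hb⟩)

theorem reduces_of_multOf_ne_zero (h : multOf Δ Init s γ ≠ 0) (hI : ∀ γ, Init γ → I (steps γ))
    (hγ : Increasing γ) : Reduces I s (steps γ) := by
  obtain ⟨m, hrel, hm⟩ := exists_multRel_of_multOf_ne_zero h
  exact hrel.reduces hm hI hγ.isForward_of_mem_steps

theorem InitPlusRect.isPlusBoundary {c d : ℕ}
    (h : InitPlusRect d (Multiset.replicate c 1) {d} γ) : IsPlusBoundary c d (steps γ) := by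
  obtain ⟨s, t, hs, ht, rfl⟩ := h
  rw [← Multiset.coe_replicate, Multiset.coe_eq_coe, List.perm_replicate] at hs
  rw [Multiset.coe_eq_singleton] at ht
  simp [IsPlusBoundary, steps_pathFrom, hSteps_eq_map, dSteps_eq_map, hs, ht]

theorem InitMinusRect.isMinusBoundary {c d : ℕ} {xs : List ℕ}
    (h : InitMinusRect d {c} (xs : Multiset ℕ) γ) : IsMinusBoundary c xs (steps γ) := by
  obtain ⟨s, t, hs, ht, rfl⟩ := h
  rw [Multiset.coe_eq_singleton] at ht
  exact ⟨s, Multiset.coe_eq_coe.1 hs, by simp [steps_pathFrom, hSteps_eq_map, ht]⟩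

end Recursion

section PlusReduction

variable {I : List Pt → Prop} {s : ℤ → Prop} {σ l : List Pt} {u v e w : Pt}

theorem Reduces.sum_eq (h : Reduces I s σ) (hI : ∀ σ, I σ → σ.sum = w) : σ.sum = w := by
  induction h with
  | init hσ => exact hI _ hσ
  | cut _ _ _ _ ih => rw [← ih]; simp [add_assoc]
  | push _ _ _ _ ih => rw [← ih]; simp [add_left_comm]

theorem isColumnStep_of_fst_eq_zero (hu : u.1 = 0) : IsColumnStep u :=
  ⟨hu.le.trans zero_le_one, fun h => absurd hu h.ne'⟩

theorem IsColumnStep.of_add (h : IsColumnStep (u + v)) (hu : IsForward u) (hv : IsForward v)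
    (hdet : 0 < det u v) : u.1 = 0 ∧ IsColumnStep v := by
  have hv₁ := hu.fst_pos_of_det_pos hv hdet
  have hu₁ := hu.fst_nonneg
  obtain ⟨h₁, h₂⟩ := h
  rw [Prod.fst_add] at h₁ h₂
  rw [Prod.snd_add] at h₂
  have hu₀ : u.1 = 0 := by omega
  have hu₂ := hu.snd_neg hu₀
  exact ⟨hu₀, by omega, fun _ => by omega⟩

theorem Reduces.isColumnStep (h : Reduces I (0 < ·) σ)
    (hI : ∀ σ, I σ → ∀ u ∈ σ, IsColumnStep u) : ∀ u ∈ σ, IsColumnStep u := by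
  induction h with
  | init hσ => exact hI _ hσ
  | cut hu hv hdet _ ih =>
    simp only [List.forall_mem_append, List.forall_mem_cons] at ih ⊢
    obtain ⟨ha, huv, hb⟩ := ih
    obtain ⟨hu₀, hv'⟩ := huv.of_add hu hv hdet
    exact ⟨ha, isColumnStep_of_fst_eq_zero hu₀, hv', hb⟩
  | push _ _ _ _ ih =>
    simp only [List.forall_mem_append, List.forall_mem_cons] at ih ⊢
    obtain ⟨ha, hv, hu, hb⟩ := ih
    exact ⟨ha, hu, hv, hb⟩

theorem IsPlusBoundary.sum_eq {c d : ℕ} (h : IsPlusBoundary c d σ) :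
    σ.sum = ((c : ℤ), -(d : ℤ)) := by
  subst h; simp

/-- A final vertical step takes no part in a left turn. -/
theorem Reduces.eq_and_of_concat {ρ : List Pt} {e₀ : Pt}
    (h : Reduces (· = ρ ++ [e₀]) (0 < ·) (l ++ [e])) (he : e.1 = 0) :
    e = e₀ ∧ Reduces (· = ρ) (0 < ·) l := by
  generalize hσ : l ++ [e] = σ at h
  induction h generalizing l with
  | init hI =>
    obtain ⟨rfl, he'⟩ := List.append_inj' (hσ.trans hI) rfl
    exact ⟨by simpa using he', .init rfl⟩
  | @cut a _ u v hu hv hdet _ ih =>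
    rcases append_cons_cons_eq_concat hσ.symm with ⟨-, rfl, -⟩ | ⟨b', rfl, rfl⟩
    · exact absurd he (hu.fst_pos_of_det_pos hv hdet).ne'
    · obtain ⟨he', hred⟩ := ih (l := a ++ (u + v) :: b') (by simp)
      exact ⟨he', .cut hu hv hdet hred⟩
  | @push a _ u v hu hv hdet _ ih =>
    rcases append_cons_cons_eq_concat hσ.symm with ⟨-, rfl, -⟩ | ⟨b', rfl, rfl⟩
    · exact absurd he (hu.fst_pos_of_det_pos hv hdet).ne'
    · obtain ⟨he', hred⟩ := ih (l := a ++ v :: u :: b') (by simp)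
      exact ⟨he', .push hu hv hdet hred⟩

end PlusReduction

section MinusReduction

variable {c : ℕ} {xs : List ℕ} {a b l σ : List Pt} {u v w e : Pt}

theorem Reduces.exists_perm_append (hc : 0 < c) (ha : ∀ u ∈ a, u.1 = 0)
    (h : Reduces (IsMinusBoundary c xs) (· < 0) (a ++ b)) :
    ∃ r, (a ++ r).Perm (dSteps xs) ∧ r.Subperm (verticals b) := by
  generalize hσ : a ++ b = σ at h
  induction h generalizing b with
  | init hI =>
    obtain ⟨s, hs, rfl⟩ := hI
    have hca : ((c : ℤ), 0) ∉ a := fun hmem => by simpa [hc.ne'] using ha _ hmem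
    obtain ⟨m, hm, rfl⟩ := exists_append_of_append_eq_append_cons hσ hca
    refine ⟨m, ?_, ?_⟩
    · rw [← hm, dSteps_eq_map, dSteps_eq_map]; exact hs.map _
    · have hm₀ : verticals m = m := List.filter_eq_self.2 fun u hu => by
        simpa using fst_eq_zero_of_mem_dSteps (xs := s) (hm ▸ List.mem_append_right a hu)
      rw [verticals_append, hm₀]
      exact (List.sublist_append_left ..).subperm
  | @cut a' b' u v hu hv hdet _ ih =>
    have hu₀ := hu.fst_pos_of_det_neg hv hdet
    obtain ⟨m, rfl, rfl⟩ :=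
      exists_append_of_append_eq_append_cons hσ fun hmem => hu₀.ne' (ha u hmem)
    obtain ⟨r, hperm, hsub⟩ := ih (b := m ++ (u + v) :: b') (by simp)
    refine ⟨r, hperm, hsub.trans (List.Sublist.subperm ?_)⟩
    rw [verticals_append, verticals_append, verticals_cons_of_fst_pos hu₀,
      verticals_cons_of_fst_pos (add_pos_of_pos_of_nonneg hu₀ hv.fst_nonneg)]
    exact List.Sublist.append_left ((List.sublist_cons_self v b').filter _) _
  | @push a' b' u v hu hv hdet _ ih =>
    have hu₀ := hu.fst_pos_of_det_neg hv hdet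
    obtain ⟨m, rfl, rfl⟩ :=
      exists_append_of_append_eq_append_cons hσ fun hmem => hu₀.ne' (ha u hmem)
    obtain ⟨r, hperm, hsub⟩ := ih (b := m ++ v :: u :: b') (by simp)
    have hswap : verticals (m ++ v :: u :: b') = verticals (m ++ u :: v :: b') := by
      simp [verticals, List.filter_cons, hu₀.ne']
    exact ⟨r, hperm, hswap ▸ hsub⟩

theorem Reduces.first_crossing (ha : ∀ u ∈ a, u.1 = 0) (hw : 0 < w.1)
    (h : Reduces (IsMinusBoundary c xs) (· < 0) (a ++ w :: b)) :
    0 ≤ w.2 ∧ (w.2 = 0 → w.1 = c) := by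
  generalize hσ : a ++ w :: b = σ at h
  induction h generalizing a w b with
  | init hI =>
    obtain ⟨s, -, rfl⟩ := hI
    obtain ⟨m, -, hm⟩ := exists_append_of_append_eq_append_cons hσ.symm
      fun hmem => hw.ne' (fst_eq_zero_of_mem_dSteps hmem)
    obtain ⟨-, rfl, -⟩ : m = [] ∧ w = ((c : ℤ), 0) ∧ b = [] := by
      cases m <;> simp_all
    exact ⟨le_rfl, fun _ => rfl⟩
  | @cut a' b' u v hu hv hdet _ ih =>
    have hu₀ := hu.fst_pos_of_det_neg hv hdet
    obtain ⟨m, rfl, hm⟩ :=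
      exists_append_of_append_eq_append_cons hσ fun hmem => hu₀.ne' (ha u hmem)
    rcases List.cons_eq_append_iff.1 hm with ⟨rfl, hw'⟩ | ⟨m', rfl, -⟩
    · obtain ⟨rfl, -⟩ := List.cons.inj hw'
      have hsum := (ih (w := u + v) (b := b') ha
        (add_pos_of_pos_of_nonneg hu₀ hv.fst_nonneg) (by simp)).1
      have hpos : 0 < u.2 := by
        by_contra! hle
        have hv₂ := snd_neg_of_det_neg hu₀ hv.fst_nonneg hle hdet
        rw [Prod.snd_add] at hsum
        omega
      exact ⟨hpos.le, fun h => absurd h hpos.ne'⟩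
    · exact ih (w := w) (b := m' ++ (u + v) :: b') ha hw (by simp)
  | @push a' b' u v hu hv hdet _ ih =>
    have hu₀ := hu.fst_pos_of_det_neg hv hdet
    obtain ⟨m, rfl, hm⟩ :=
      exists_append_of_append_eq_append_cons hσ fun hmem => hu₀.ne' (ha u hmem)
    rcases List.cons_eq_append_iff.1 hm with ⟨rfl, hw'⟩ | ⟨m', rfl, -⟩
    · obtain ⟨rfl, -⟩ := List.cons.inj hw'
      rcases hv.fst_nonneg.eq_or_lt' with hv₀ | hv₀
      · have hav : ∀ z ∈ a ++ [v], z.1 = 0 :=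
          List.forall_mem_append.2 ⟨ha, by simpa only [List.forall_mem_singleton] using hv₀⟩
        exact ih (w := u) (b := b') hav hu₀ (by simp)
      · have hv₂ := (ih (w := v) (b := u :: b') ha hv₀ (by simp)).1
        have hpos : 0 < u.2 := by
          by_contra! hle
          exact hv₂.not_gt (snd_neg_of_det_neg hu₀ hv₀.le hle hdet)
        exact ⟨hpos.le, fun h => absurd h hpos.ne'⟩
    · exact ih (w := w) (b := m' ++ v :: u :: b') ha hw (by simp)

theorem Reduces.last_crossing (he : 0 < e.1)
    (h : Reduces (IsMinusBoundary c xs) (· < 0) (l ++ [e])) :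
    e.2 ≤ 0 ∧ (e.2 = 0 → e.1 = c) := by
  generalize hσ : l ++ [e] = σ at h
  induction h generalizing l e with
  | init hI =>
    obtain ⟨s, -, rfl⟩ := hI
    obtain ⟨-, he'⟩ := List.append_inj' hσ rfl
    simp_all
  | @cut a b u v hu hv hdet _ ih =>
    rcases append_cons_cons_eq_concat hσ.symm with ⟨rfl, rfl, -⟩ | ⟨b', rfl, rfl⟩
    · have hu₀ := hu.fst_pos_of_det_neg hv hdet
      have hsum := (ih (add_pos hu₀ he) rfl).1
      have hneg : v.2 < 0 := by
        by_contra! hle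
        have hu₂ : 0 < u.2 := not_le.1 fun hu₂ =>
          hle.not_gt (snd_neg_of_det_neg hu₀ he.le hu₂ hdet)
        rw [Prod.snd_add] at hsum
        omega
      exact ⟨hneg.le, fun h => absurd h hneg.ne⟩
    · exact ih (l := a ++ (u + v) :: b') he (by simp)
  | @push a b u v hu hv hdet _ ih =>
    rcases append_cons_cons_eq_concat hσ.symm with ⟨rfl, rfl, -⟩ | ⟨b', rfl, rfl⟩
    · have hu₀ := hu.fst_pos_of_det_neg hv hdet
      have hu₂ := (ih (l := a ++ [v]) hu₀ (by simp)).1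
      have hneg := snd_neg_of_det_neg hu₀ he.le hu₂ hdet
      exact ⟨hneg.le, fun h => absurd h hneg.ne⟩
    · exact ih (l := a ++ v :: u :: b') he (by simp)

end MinusReduction

section Ascent

variable {c : ℕ} {xs : List ℕ} {σ : List Pt} {l₁ l₂ : List Pt}

theorem snd_sum_le_of_subperm (h : l₁.Subperm l₂) (h₂ : ∀ u ∈ l₂, u.2 ≤ 0) :
    l₂.sum.2 ≤ l₁.sum.2 := by
  obtain ⟨l, hperm, hsub⟩ := h
  rw [← hperm.sum_eq]
  clear hperm
  induction hsub with
  | slnil => rfl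
  | cons u _ ih =>
    rw [List.forall_mem_cons] at h₂
    simpa using add_le_of_nonpos_of_le h₂.1 (ih h₂.2)
  | cons_cons u _ ih => simpa using ih (List.forall_mem_cons.1 h₂).2

/-- The excess verticals descend too far unless some step climbs. -/
theorem exists_ascending (hσ : ∀ u ∈ σ, IsForward u) (hsub : (dSteps xs).Subperm (verticals σ))
    (hlen : xs.length < (verticals σ).length) (hsum : σ.sum.2 = -(xs.sum : ℤ)) :
    ∃ u ∈ σ, 0 < u.1 ∧ 0 < u.2 := by
  by_contra! hle
  obtain ⟨u, hu⟩ := hsub.exists_of_length_lt (by rwa [length_dSteps])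
  have hneg : ∀ w ∈ verticals σ, w.2 < 0 := fun w hw =>
    (hσ w (mem_verticals.1 hw).1).snd_neg (mem_verticals.1 hw).2
  have hsum' := snd_sum_le_of_subperm hu fun w hw => (hneg w hw).le
  have hu₂ := hneg u (hu.subset List.mem_cons_self)
  have hle' := snd_sum_le_snd_sum_verticals hσ hle
  simp only [List.sum_cons, sum_dSteps, Prod.snd_add] at hsum'
  omega

theorem IsMinusBoundary.sum_eq (h : IsMinusBoundary c xs σ) :
    σ.sum = ((c : ℤ), -(xs.sum : ℤ)) := by
  obtain ⟨s, hs, rfl⟩ := h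
  simp [sum_dSteps, hs.sum_eq]

theorem full_crossing_notMem (hc : 0 < c) (hσ : ∀ u ∈ σ, IsForward u)
    (h : Reduces (IsMinusBoundary c xs) (· < 0) σ) (hlen : xs.length < (verticals σ).length) :
    ((c : ℤ), 0) ∉ σ := by
  intro hmem
  have hsum := h.sum_eq fun _ => IsMinusBoundary.sum_eq
  obtain ⟨r, hr, hsub⟩ := h.exists_perm_append (a := []) hc (by simp)
  obtain ⟨u, hu, hu₁, hu₂⟩ :=
    exists_ascending hσ (hr.subperm_right.1 hsub) hlen (by rw [hsum])
  have hu' : u ∈ σ.erase ((c : ℤ), 0) :=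
    (List.mem_erase_of_ne fun heq => hu₂.ne' (by rw [heq])).2 hu
  have hle := fst_le_fst_sum (fun w hw => hσ w (List.mem_of_mem_erase hw)) hu'
  rw [(List.perm_cons_erase hmem).sum_eq, List.sum_cons] at hsum
  have hfst := congrArg Prod.fst hsum
  rw [Prod.fst_add] at hfst
  omega

end Ascent

/-- A step of `γ(A,B)` with its label: a down step of size `xᵢ` remembers `i`, and a step to the
next column remembers the `i` whose sizes it adds up.  The latter is a multiset, so that labelled
steps can be built up before disjointness is known. -/
inductive LabelledStep (α : Type*)
  | drop (i : α)
  | cross (B : Multiset α)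

namespace LabelledStep

variable {α : Type*} {x : α → ℕ} {S : Multiset α} {L L' K : List (LabelledStep α)} {c : ℕ}

/-- The step vector of a labelled step. -/
def toStep (x : α → ℕ) : LabelledStep α → Pt
  | drop i => (0, -(x i : ℤ))
  | cross B => (1, (B.map fun i => (x i : ℤ)).sum)

/-- The labels of the down steps, in order. -/
def dropped : List (LabelledStep α) → List α
  | [] => []
  | drop i :: L => i :: dropped L
  | cross _ :: L => dropped L

/-- Starting with the stock `S`, every down step adds its label to the stock, every step to the
next column removes its labels from it, and the stock is empty at the end.  This is the condition
`B_k ⊆ (A₀ ∪ ⋯ ∪ A_k) \ (B₀ ∪ ⋯ ∪ B_{k-1})` together with exhaustion. -/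
def Balanced : Multiset α → List (LabelledStep α) → Prop
  | S, [] => S = 0
  | S, drop i :: L => Balanced (i ::ₘ S) L
  | S, cross B :: L => ∃ T, S = B + T ∧ Balanced T L

theorem exists_eq_cross_of_fst_pos {s : LabelledStep α} (h : 0 < (s.toStep x).1) :
    ∃ B, s = cross B := by
  cases s with
  | drop i => exact absurd h (lt_irrefl 0)
  | cross B => exact ⟨B, rfl⟩

theorem toStep_cross_cons (x : α → ℕ) (i : α) (B : Multiset α) :
    (drop i).toStep x + (cross (i ::ₘ B)).toStep x = (cross B).toStep x := by
  simp [toStep]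

theorem dropped_append (K L : List (LabelledStep α)) :
    dropped (K ++ L) = dropped K ++ dropped L := by
  induction K with
  | nil => rfl
  | cons s K ih => cases s <;> simp [dropped, ih]

theorem Balanced.append_left (hK : ∀ S, Balanced S L → Balanced S L')
    (h : Balanced S (K ++ L)) : Balanced S (K ++ L') := by
  induction K generalizing S with
  | nil => exact hK S h
  | cons s K ih =>
    cases s with
    | drop i => exact ih (S := i ::ₘ S) h
    | cross B =>
      obtain ⟨T, hS, hT⟩ := h
      exact ⟨T, hS, ih hT⟩

theorem Balanced.drop_cross_cons {B : Multiset α} (i : α) (h : Balanced S (cross B :: L)) :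
    Balanced S (drop i :: cross (i ::ₘ B) :: L) := by
  obtain ⟨T, rfl, hT⟩ := h
  exact ⟨T, by rw [Multiset.cons_add], hT⟩

theorem Balanced.swap_cross {B : Multiset α} {s : LabelledStep α}
    (h : Balanced S (cross B :: s :: L)) : Balanced S (s :: cross B :: L) := by
  obtain ⟨T, rfl, hT⟩ := h
  cases s with
  | drop i => exact ⟨i ::ₘ T, by rw [Multiset.add_cons], hT⟩
  | cross C =>
    obtain ⟨U, rfl, hU⟩ := hT
    exact ⟨B + U, by rw [add_left_comm], U, rfl, hU⟩

theorem balanced_replicate_cross (c : ℕ) :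
    Balanced 0 (List.replicate c (cross (0 : Multiset α))) := by
  induction c with
  | zero => rfl
  | succ c ih => exact ⟨0, rfl, ih⟩

theorem balanced_map_drop_append {A : List α} :
    Balanced S (A.map drop ++ L) ↔ Balanced (S + (A : Multiset α)) L := by
  induction A generalizing S with
  | nil => simp
  | cons i A ih =>
    rw [List.map_cons, List.cons_append, Balanced, ih, ← Multiset.cons_coe, Multiset.add_cons,
      Multiset.cons_add]

/-- `l` is the step list of a balanced list of labelled steps whose down steps carry the labels
`M`. -/
def HasLabelling (x : α → ℕ) (M : Multiset α) (l : List Pt) : Prop :=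
  ∃ L, L.map (toStep x) = l ∧ (dropped L : Multiset α) = M ∧ Balanced 0 L

theorem hasLabelling_replicate (x : α → ℕ) (c : ℕ) :
    HasLabelling x 0 (List.replicate c (1, 0)) := by
  refine ⟨List.replicate c (cross 0), by simp [toStep], ?_, balanced_replicate_cross c⟩
  induction c with
  | zero => rfl
  | succ c ih => simpa [List.replicate_succ, dropped] using ih

variable {M : Multiset α} {a b : List Pt} {u v : Pt}

/-- Undoing a cut adds the label of the new down step to the following step to the next column. -/
theorem HasLabelling.of_cut (h : HasLabelling x M (a ++ (u + v) :: b)) (huv : 0 < (u + v).1)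
    {i : α} (hi : (drop i).toStep x = u) : HasLabelling x (i ::ₘ M) (a ++ u :: v :: b) := by
  obtain ⟨L, hL, hdrop, hbal⟩ := h
  obtain ⟨K, L', rfl, rfl, hL'⟩ := List.map_eq_append_iff.1 hL
  obtain ⟨s, L, rfl, hs, rfl⟩ := List.map_eq_cons_iff.1 hL'
  obtain ⟨B, rfl⟩ := exists_eq_cross_of_fst_pos (hs ▸ huv)
  have hv : (cross (i ::ₘ B)).toStep x = v := by
    rw [← toStep_cross_cons x i B, hi] at hs
    exact add_left_cancel hs
  refine ⟨K ++ drop i :: cross (i ::ₘ B) :: L, by simp [hi, hv], ?_,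
    hbal.append_left fun _ => Balanced.drop_cross_cons i⟩
  simp [← hdrop, dropped_append, dropped]

theorem HasLabelling.of_push (h : HasLabelling x M (a ++ v :: u :: b)) (hv : 0 < v.1) :
    HasLabelling x M (a ++ u :: v :: b) := by
  obtain ⟨L, hL, hdrop, hbal⟩ := h
  obtain ⟨K, L', rfl, rfl, hL'⟩ := List.map_eq_append_iff.1 hL
  obtain ⟨s, L'', rfl, rfl, hL''⟩ := List.map_eq_cons_iff.1 hL'
  obtain ⟨t, L, rfl, rfl, rfl⟩ := List.map_eq_cons_iff.1 hL''
  obtain ⟨B, rfl⟩ := exists_eq_cross_of_fst_pos hv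
  refine ⟨K ++ t :: cross B :: L, by simp, ?_, hbal.append_left fun _ => Balanced.swap_cross⟩
  rw [← hdrop]
  cases t <;> simp [dropped_append, dropped]

end LabelledStep

open LabelledStep

theorem Reduces.hasLabelling {α : Type*} {x : α → ℕ} {c : ℕ} {l : List Pt}
    (h : Reduces (· = List.replicate c (1, 0)) (0 < ·) l) (M : Multiset α)
    (hM : M.map (fun i => (drop i).toStep x) = verticals l) : HasLabelling x M l := by
  induction h generalizing M with
  | init hl =>
    subst hl
    have hM₀ : M = 0 := by simpa [verticals] using hM
    exact hM₀ ▸ hasLabelling_replicate x c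
  | @cut a b u v hu hv hdet hred ih =>
    have hcol : IsColumnStep (u + v) := by
      refine hred.isColumnStep ?_ _ (by simp)
      rintro _ rfl w hw
      simp [List.eq_of_mem_replicate hw, IsColumnStep]
    have hu₀ := (hcol.of_add hu hv hdet).1
    have hv₀ := hu.fst_pos_of_det_pos hv hdet
    have huv₀ : 0 < (u + v).1 := by simpa [hu₀] using hv₀
    rw [verticals_append, verticals_cons_of_fst_eq_zero hu₀, verticals_cons_of_fst_pos hv₀,
      Multiset.coe_eq_coe.2 List.perm_middle, ← Multiset.cons_coe, ← Multiset.map_eq_cons] at hM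
    obtain ⟨i, hi, hiu, hM'⟩ := hM
    have hlab : HasLabelling x (M.erase i) (a ++ (u + v) :: b) :=
      ih _ (by rw [hM', verticals_append, verticals_cons_of_fst_pos huv₀])
    exact Multiset.cons_erase hi ▸ hlab.of_cut huv₀ hiu
  | @push a b u v hu hv hdet _ ih =>
    have hv₀ := hu.fst_pos_of_det_pos hv hdet
    have hswap : verticals (a ++ v :: u :: b) = verticals (a ++ u :: v :: b) := by
      simp [verticals, List.filter_cons, hv₀.ne']
    exact (ih M (by rw [hM, hswap])).of_push hv₀

section Columns

variable {α : Type*} {S : Multiset α} {L : List (LabelledStep α)} {c : ℕ}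

/-- The labelled steps which in column `k` descend by the labels `A k` in order and then cross with
the labels `B k`. -/
def columns (A : Fin c → List α) (B : Fin c → Multiset α) : List (LabelledStep α) :=
  (List.ofFn fun k => (A k).map drop ++ [cross (B k)]).flatten

theorem columns_succ (A : Fin (c + 1) → List α) (B : Fin (c + 1) → Multiset α) :
    columns A B =
      (A 0).map drop ++ cross (B 0) :: columns (fun k => A k.succ) fun k => B k.succ := by
  simp [columns, List.ofFn_succ]

theorem length_dropped_le (L : List (LabelledStep α)) : (dropped L).length ≤ L.length := by
  induction L with
  | nil => rfl
  | cons s L ih => cases s <;> simp only [dropped, List.length_cons] <;> omega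

theorem LabelledStep.Balanced.exists_eq_columns (h : Balanced S L)
    (hc : L.length = (dropped L).length + c) : ∃ A B, L = columns (c := c) A B := by
  induction L generalizing S c with
  | nil =>
    obtain rfl : 0 = c := by simpa [dropped] using hc
    exact ⟨Fin.elim0, Fin.elim0, rfl⟩
  | cons s L ih =>
    cases s with
    | drop i =>
      obtain ⟨A, B, rfl⟩ := ih (c := c) h (by simp only [dropped, List.length_cons] at hc; omega)
      cases c with
      | zero => simp [columns, Balanced] at h
      | succ c =>
        exact ⟨Fin.cons (i :: A 0) fun k => A k.succ, B, by simp [columns_succ]⟩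
    | cross B₀ =>
      have hle := length_dropped_le L
      simp only [dropped, List.length_cons] at hc
      obtain ⟨c, rfl⟩ : ∃ c', c = c' + 1 := Nat.exists_eq_add_one.2 (by omega)
      obtain ⟨T, -, hT⟩ := h
      obtain ⟨A, B, rfl⟩ := ih (c := c) hT (by omega)
      exact ⟨Fin.cons [] A, Fin.cons B₀ B, by simp [columns_succ]⟩

theorem dropped_columns (A : Fin c → List α) (B : Fin c → Multiset α) :
    dropped (columns A B) = (List.ofFn A).flatten := by
  induction c with
  | zero => rfl
  | succ c ih =>
    have hmap : ∀ l : List α, dropped (l.map drop) = l := fun l => by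
      induction l <;> simp_all [dropped]
    simp [columns_succ, List.ofFn_succ, dropped_append, dropped, ih, hmap]

theorem LabelledStep.Balanced.sum_columns {A : Fin c → List α} {B : Fin c → Multiset α}
    (h : Balanced S (columns A B)) :
    ∑ k, B k = S + ((List.ofFn A).flatten : Multiset α) := by
  induction c generalizing S with
  | zero => simpa [columns, Balanced] using h.symm
  | succ c ih =>
    rw [columns_succ, balanced_map_drop_append] at h
    obtain ⟨T, hS, hT⟩ := h
    rw [Fin.sum_univ_succ, ih hT, ← add_assoc, ← hS, List.ofFn_succ, List.flatten_cons,
      ← Multiset.coe_add, add_assoc]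

theorem LabelledStep.Balanced.mem_columns {A : Fin c → List α} {B : Fin c → Multiset α}
    (h : Balanced S (columns A B)) {k : Fin c} {i : α} (hi : i ∈ B k) :
    i ∈ S ∨ ∃ j ≤ k, i ∈ A j := by
  induction c generalizing S with
  | zero => exact k.elim0
  | succ c ih =>
    rw [columns_succ, balanced_map_drop_append] at h
    obtain ⟨T, hS, hT⟩ := h
    have hstock : ∀ i ∈ B 0 + T, i ∈ S ∨ i ∈ A 0 := fun i hi => by
      rwa [← hS, Multiset.mem_add, Multiset.mem_coe] at hi
    cases k using Fin.cases with
    | zero =>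
      exact (hstock i (Multiset.mem_add.2 (.inl hi))).imp_right fun h => ⟨0, le_rfl, h⟩
    | succ k =>
      rcases ih hT hi with hiT | ⟨j, hj, hij⟩
      · exact (hstock i (Multiset.mem_add.2 (.inr hiT))).imp_right fun h => ⟨0, Fin.zero_le _, h⟩
      · exact .inr ⟨j.succ, Fin.succ_le_succ_iff.2 hj, hij⟩

end Columns

section SumEqUniv

variable {ι α : Type*} [Fintype ι] [Fintype α] {B : ι → Multiset α}

theorem existsUnique_mem_of_sum_eq_univ (hB : ∑ k, B k = (Finset.univ : Finset α).val)
    (i : α) : ∃! k, i ∈ B k := by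
  have hcount : ∑ k, (B k).count i = 1 := by
    rw [← Multiset.count_sum', hB, Multiset.count_univ]
  obtain ⟨k, -, hk⟩ := Finset.exists_ne_zero_of_sum_ne_zero (hcount ▸ one_ne_zero)
  refine ⟨k, Multiset.count_ne_zero.1 hk, fun j hj => ?_⟩
  by_contra hjk
  have hj' := Multiset.count_pos.2 hj
  have hle := Finset.sum_le_univ_sum_of_nonneg (s := {j, k}) fun k => Nat.zero_le ((B k).count i)
  rw [Finset.sum_pair hjk] at hle
  omega

theorem nodup_of_sum_eq_univ (hB : ∑ k, B k = (Finset.univ : Finset α).val) (k : ι) :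
    (B k).Nodup :=
  Multiset.nodup_of_le (hB ▸ Finset.single_le_sum (fun _ _ => zero_le) (Finset.mem_univ k))
    Finset.univ.nodup

end SumEqUniv

section Admissible

variable {c n : ℕ} {A : Fin c → List (Fin n)} {B : Fin c → Multiset (Fin n)}

theorem LabelledStep.Balanced.sum_columns_eq_univ (h : Balanced 0 (columns A B))
    (hA : (dropped (columns A B) : Multiset (Fin n)) = Finset.univ.val) :
    ∑ k, B k = (Finset.univ : Finset (Fin n)).val := by
  rw [h.sum_columns, zero_add, ← dropped_columns A B, hA]

theorem LabelledStep.Balanced.isAdmissible (h : Balanced 0 (columns A B))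
    (hA : (dropped (columns A B) : Multiset (Fin n)) = Finset.univ.val)
    (hB₀ : ∀ k : Fin c, (k : ℕ) = 0 → B k ≠ 0) :
    IsAdmissible A fun k => (B k).toFinset := by
  have hsum := h.sum_columns_eq_univ hA
  have hunique := existsUnique_mem_of_sum_eq_univ hsum
  rw [dropped_columns] at hA
  refine ⟨hA, by simpa using hunique, fun k hk => ?_, fun k i hi => ?_⟩
  · simpa using hB₀ k hk
  · rw [Multiset.mem_toFinset] at hi
    have hstock := (h.mem_columns hi).resolve_left (Multiset.notMem_zero i)
    have hfresh : ∀ j < k, i ∉ B j := fun j hj hij => hj.ne ((hunique i).unique hij hi)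
    simpa using ⟨hstock, hfresh⟩

theorem map_toStep_columns (x : Fin n → ℕ) (hB : ∀ k, (B k).Nodup) :
    (columns A B).map (toStep x) =
      (List.ofFn (colSteps x A fun k => (B k).toFinset)).flatten := by
  rw [columns, List.map_flatten, List.map_ofFn]
  congr 2
  funext k
  simp [colSteps, toStep, Finset.sum, (hB k).dedup]

end Admissible

section Assembly

variable {c d n : ℕ} {xs : List ℕ} {σ l t : List Pt} {u : Pt}

theorem IsPlusBoundary.forall_isColumnStep (h : IsPlusBoundary c d σ) :
    ∀ u ∈ σ, IsColumnStep u := by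
  intro u hu
  rw [h, List.mem_append, List.mem_replicate, List.mem_singleton] at hu
  rcases hu with ⟨-, rfl⟩ | rfl <;> simp [IsColumnStep]

theorem exists_eq_concat_of_reduces (hσ : ∀ u ∈ σ, IsForward u) (hne : σ ≠ [])
    (hplus : Reduces (IsPlusBoundary c d) (0 < ·) σ)
    (hminus : Reduces (IsMinusBoundary c xs) (· < 0) σ) (hfull : ((c : ℤ), 0) ∉ σ) :
    ∃ l, σ = l ++ [(0, -(d : ℤ))] ∧ Reduces (· = List.replicate c (1, 0)) (0 < ·) l := by
  obtain ⟨l, e, rfl⟩ := (List.eq_nil_or_concat' σ).resolve_left hne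
  have he : e ∈ l ++ [e] := by simp
  have hcol := hplus.isColumnStep (fun _ => IsPlusBoundary.forall_isColumnStep) e he
  have he₀ : e.1 = 0 := by
    by_contra hne₀
    have hpos : 0 < e.1 := (hσ e he).fst_nonneg.lt_of_ne' hne₀
    obtain ⟨hle, hwidth⟩ := hminus.last_crossing hpos
    have hsnd : e.2 = 0 := hle.antisymm (hcol.2 hpos)
    have heq : e = ((c : ℤ), 0) := Prod.ext (hwidth hsnd) hsnd
    exact hfull (heq ▸ he)
  obtain ⟨rfl, hl⟩ := Reduces.eq_and_of_concat hplus he₀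
  exact ⟨l, rfl, hl⟩

theorem fst_eq_zero_of_head (hu : IsForward u) (hu₂ : u.2 ≤ 0)
    (hminus : Reduces (IsMinusBoundary c xs) (· < 0) (u :: t)) (hfull : ((c : ℤ), 0) ∉ u :: t) :
    u.1 = 0 := by
  by_contra hne
  obtain ⟨hle, hwidth⟩ :=
    hminus.first_crossing (a := []) (by simp) (hu.fst_nonneg.lt_of_ne' hne)
  have hsnd : u.2 = 0 := hu₂.antisymm hle
  have heq : u = ((c : ℤ), 0) := Prod.ext (hwidth hsnd) hsnd
  exact hfull (heq ▸ List.mem_cons_self)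

theorem verticals_perm_dSteps (hc : 0 < c) (hu : u.1 = 0) (hu₂ : u.2 < 0)
    (hminus : Reduces (IsMinusBoundary c xs) (· < 0) (u :: (t ++ [(0, -(xs.sum : ℤ))])))
    (hlen : (verticals (u :: t)).length = xs.length) :
    (verticals (u :: t)).Perm (dSteps xs) := by
  obtain ⟨r, hperm, hsub⟩ := hminus.exists_perm_append (a := [u])
    (b := t ++ [(0, -(xs.sum : ℤ))]) hc (by simpa using hu)
  rw [verticals_concat_of_fst_eq_zero rfl] at hsub
  -- `u` and the full right edge together would exceed the height of the rectangle.
  have hlast : ((0 : ℤ), -(xs.sum : ℤ)) ∉ r := by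
    intro hmem
    have hpair := ((List.subperm_cons u).2 (List.singleton_subperm_iff.2 hmem)).trans hperm.subperm
    have hle := snd_sum_le_of_subperm hpair fun w hw => by
      rw [dSteps_eq_map] at hw
      obtain ⟨k, -, rfl⟩ := List.mem_map.1 hw
      simp
    simp only [sum_dSteps, List.sum_cons, List.sum_nil, Prod.snd_add, Prod.snd_zero] at hle
    omega
  have hsub' : r.Subperm (verticals t) := by
    have h := ((List.perm_append_singleton _ _).subperm_left.1 hsub).erase (0, -(xs.sum : ℤ))
    rwa [List.erase_of_not_mem hlast, List.erase_cons_head] at h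
  have hlen' := hperm.length_eq
  rw [verticals_cons_of_fst_eq_zero hu] at hlen ⊢
  simp only [length_dSteps, List.length_append, List.length_cons, List.length_nil] at hlen hlen'
  exact ((hsub'.perm_of_length_le (by omega)).symm.cons u).trans hperm

theorem exists_columns_of_reduces {x : Fin n → ℕ} (hlen : l.length = n + c)
    (hl : Reduces (· = List.replicate c (1, 0)) (0 < ·) l)
    (hperm : (verticals l).Perm (dSteps (List.ofFn x))) :
    ∃ (A : Fin c → List (Fin n)) (B : Fin c → Multiset (Fin n)),
      (columns A B).map (toStep x) = l ∧
        (dropped (columns A B) : Multiset (Fin n)) = Finset.univ.val ∧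
          Balanced 0 (columns A B) := by
  obtain ⟨L, rfl, hdrop, hbal⟩ := hl.hasLabelling (x := x) Finset.univ.val (by
    rw [Multiset.coe_eq_coe.2 hperm, dSteps_eq_map, List.map_ofFn, Fin.univ_val_map]
    rfl)
  have hcard : (dropped L).length = n := by simpa using congrArg Multiset.card hdrop
  obtain ⟨A, B, rfl⟩ := hbal.exists_eq_columns (c := c) (by simpa [hcard] using hlen)
  exact ⟨A, B, rfl, hdrop, hbal⟩

theorem ne_zero_of_reduces_columns {α : Type*} {x : α → ℕ} {A : Fin c → List α}
    {B : Fin c → Multiset α}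
    (hminus : Reduces (IsMinusBoundary c xs) (· < 0) ((columns A B).map (toStep x) ++ t))
    (hfull : ((c : ℤ), 0) ∉ (columns A B).map (toStep x) ++ t) (k : Fin c) (hk : (k : ℕ) = 0) :
    B k ≠ 0 := by
  cases c with
  | zero => exact k.elim0
  | succ c =>
    obtain rfl : k = 0 := Fin.ext hk
    intro hB
    have hsplit : (columns A B).map (toStep x) ++ t = ((A 0).map drop).map (toStep x) ++
        (1, 0) :: ((columns (fun k => A k.succ) fun k => B k.succ).map (toStep x) ++ t) := by
      simp [columns_succ, hB, toStep]
    rw [hsplit] at hminus hfull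
    have hwidth := (hminus.first_crossing (by simp [toStep]) one_pos).2 rfl
    exact hfull (by simp [← hwidth])

theorem exists_isAdmissible_of_reduces {x : Fin n → ℕ} (hc : 0 < c)
    (hσ : ∀ u ∈ σ, IsForward u) (hhead : ∀ u ∈ σ.head?, u.2 ≤ 0) (hlen : σ.length = n + c + 1)
    (hplus : Reduces (IsPlusBoundary c (∑ i, x i)) (0 < ·) σ)
    (hminus : Reduces (IsMinusBoundary c (List.ofFn x)) (· < 0) σ) :
    ∃ (A : Fin c → List (Fin n)) (B : Fin c → Finset (Fin n)), IsAdmissible A B ∧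
      σ = (List.ofFn (colSteps x A B)).flatten ++ [(0, -((∑ i, x i : ℕ) : ℤ))] := by
  have hverticals : (verticals σ).length = n + 1 := by
    have h := length_eq_length_verticals_add hσ fun u hu =>
      (hplus.isColumnStep (fun _ => IsPlusBoundary.forall_isColumnStep) u hu).1
    rw [hplus.sum_eq fun _ => IsPlusBoundary.sum_eq] at h
    simp only at h
    omega
  have hfull : ((c : ℤ), 0) ∉ σ := full_crossing_notMem hc hσ hminus (by simp [hverticals])
  obtain ⟨l, rfl, hl⟩ :=
    exists_eq_concat_of_reduces hσ (by rintro rfl; simp at hlen) hplus hminus hfull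
  obtain ⟨u, t, rfl⟩ := List.exists_cons_of_ne_nil (show l ≠ [] by rintro rfl; simp at hlen; omega)
  have hu : IsForward u := hσ u (by simp)
  have hu₀ := fst_eq_zero_of_head hu (hhead u (by simp)) hminus hfull
  rw [verticals_concat_of_fst_eq_zero rfl] at hverticals
  have hperm : (verticals (u :: t)).Perm (dSteps (List.ofFn x)) :=
    verticals_perm_dSteps hc hu₀ (hu.snd_neg hu₀) (by rwa [List.sum_ofFn])
      (by simpa using hverticals)
  obtain ⟨A, B, hAB, hdrop, hbal⟩ := exists_columns_of_reduces (c := c)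
    (by simpa using hlen) hl hperm
  rw [← hAB] at hminus hfull
  refine ⟨A, fun k => (B k).toFinset,
    hbal.isAdmissible hdrop (ne_zero_of_reduces_columns hminus hfull), ?_⟩
  rw [← hAB, map_toStep_columns x (nodup_of_sum_eq_univ (hbal.sum_columns_eq_univ hdrop))]

end Assembly

section Path

variable {c d : ℕ} {γ : List Pt}

theorem IsPathRect.pathFrom_steps (hγ : IsPathRect c d γ) :
    pathFrom (0, (d : ℤ)) (steps γ) = γ := by
  obtain ⟨t, rfl⟩ := List.head?_eq_some_iff.1 hγ.2.1
  exact TropPaths.pathFrom_steps _ _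

theorem IsPathRect.snd_head_steps_nonpos (hγ : IsPathRect c d γ) :
    ∀ u ∈ (steps γ).head?, u.2 ≤ 0 := by
  obtain ⟨-, hhead, -, hinside⟩ := hγ
  obtain ⟨t, rfl⟩ := List.head?_eq_some_iff.1 hhead
  cases t with
  | nil => simp [steps]
  | cons q t =>
    have hq : q.2 ≤ d := (hinside q (by simp)).2.2.2
    simpa [steps_cons_cons] using hq

end Path

theorem nonzero_path_eq_gammaAB_general (c n : ℕ) (hc : 0 < c) (x : Fin n → ℕ)
    (γ : List Pt) (hγ : IsPathRect c (∑ i, x i) γ) (hlen : γ.length = n + c + 2)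
    (hmult : multRect c (∑ i, x i) {c} (Multiset.replicate c 1)
        ((List.ofFn x : List ℕ) : Multiset ℕ) {∑ i, x i} γ ≠ 0) :
    ∃ (A : Fin c → List (Fin n)) (B : Fin c → Finset (Fin n)),
      IsAdmissible A B ∧ γ = gammaAB x A B := by
  have hplus : Reduces (IsPlusBoundary c (∑ i, x i)) (0 < ·) (steps γ) :=
    reduces_of_multOf_ne_zero (left_ne_zero_of_mul hmult)
      (fun _ => InitPlusRect.isPlusBoundary) hγ.1
  have hminus : Reduces (IsMinusBoundary c (List.ofFn x)) (· < 0) (steps γ) :=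
    reduces_of_multOf_ne_zero (right_ne_zero_of_mul hmult)
      (fun _ => InitMinusRect.isMinusBoundary) hγ.1
  obtain ⟨A, B, hAB, hsteps⟩ := exists_isAdmissible_of_reduces hc hγ.1.isForward_of_mem_steps
    hγ.snd_head_steps_nonpos (by rw [length_steps, hlen]; rfl) hplus hminus
  exact ⟨A, B, hAB, by rw [gammaAB, ← hsteps, hγ.pathFrom_steps]⟩

/-- Every path with nonzero multiplicity in the rectangle with boundary
data `μ₁ = (c)`, `μ₂ = (1,…,1)`, `ν₁ = (x₁,…,xₙ)`, `ν₂ = (d)` (for generic `x`) equals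
`γ(A,B)` for some admissible pair `(A,B)`. -/
theorem nonzero_path_eq_gammaAB (c n : ℕ) (hc : 0 < c) (hn : 0 < n)
    (x : Fin n → ℕ) (hx : ∀ i, 0 < x i) (hgen : Generic x)
    (γ : List Pt) (hγ : IsPathRect c (∑ i, x i) γ) (hlen : γ.length = n + c + 2)
    (hmult : multRect c (∑ i, x i) {c} (Multiset.replicate c 1)
        ((List.ofFn x : List ℕ) : Multiset ℕ) {∑ i, x i} γ ≠ 0) :
    ∃ (A : Fin c → List (Fin n)) (B : Fin c → Finset (Fin n)),
      IsAdmissible A B ∧ γ = gammaAB x A B :=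
  nonzero_path_eq_gammaAB_general c n hc x γ hγ hlen hmult

end TropPaths
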